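/- arXiv:2506.17304 — 2 statements merged into one kernel-verified Lean document; each statement's English description precedes it below -/
import Mathlib

section
/- McAllester's PAC-Bayes bound: let losses take values in [0,1], let P be a prior probability measure on the hypothesis space H, let n ≥ 1, and let δ ∈ (0,1). Then with probability at least 1 − δ over the draw of n i.i.d. samples z₁, …, z_n from D, simultaneously for every probability measure Q on H: E_{h∼Q}[R(h)] ≤ E_{h∼Q}[R̂_n(h)] + sqrt( (KL(Q‖P) + log(2√n/δ)) / (2n) ). -/
/-!
Write `Δ = R(h) - R̂_n(h)`. The bound follows from the moment estimate
`E[exp (2 n Δ²)] ≤ 2 √n` for each fixed `h` (`lintegral_exp_sq_le`): averaging it over the prior `P`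
and applying Markov's inequality gives, with probability at least `1 - δ`,
`∫ exp (2 n Δ²) dP < 2 √n / δ`, and on that event the Donsker–Varadhan inequality
(`integral_le_llr_add_log`) and Jensen's inequality bound `E_Q[Δ]` for every `Q` simultaneously.

The moment estimate comes from a mixture of Hoeffding's bounds. With `x = 2 √n Δ`, Hoeffding's lemma
says `E[exp (v x - v² / 2)] ≤ 1` for every real `v`. Since the losses lie in `[0,1]`, `x` lies in the
interval `[a, b] = [2 √n (R - 1), 2 √n R]`, whose length `2 √n` is at least `2`. Completing the square,
`∫_a^b exp (v x - v² / 2) dv = exp (x² / 2) ∫_a^b exp (-(v - x)² / 2) dv`, and the last integral is at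
least `1` because the window contains `x` and has length at least `2`. Hence
`exp (2 n Δ²) ≤ ∫_a^b exp (v x - v² / 2) dv`, and the expectation of the right-hand side is at most
`b - a = 2 √n`.
-/

open MeasureTheory ENNReal Classical

/-- Kullback–Leibler divergence `KL(Q‖P)`, valued in `ℝ≥0∞`: the integral of
the log-likelihood ratio when `Q ≪ P` and the ratio is integrable, `+∞`
otherwise. -/
noncomputable def klDiv' {H : Type*} [MeasurableSpace H] (Q P : Measure H) : ℝ≥0∞ :=
  if Q ≪ P ∧ Integrable (llr Q P) Q then ENNReal.ofReal (∫ h, llr Q P h ∂Q) else ⊤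

open ProbabilityTheory

/-! ### Gaussian mass of a window -/

/-- On `[0, 2]` the Gaussian integral lies above the chord `p / 2`; the integrand is bounded below
by `(1 - v² / 4)²`. -/
lemma half_le_integral_gauss {p : ℝ} (hp0 : 0 ≤ p) (hp2 : p ≤ 2) :
    p / 2 ≤ ∫ v in (0:ℝ)..p, Real.exp (-(v ^ 2 / 2)) := by
  have hpoly : ∫ v in (0:ℝ)..p, (1 - v ^ 2 / 2 + v ^ 4 / 16) = p - p ^ 3 / 6 + p ^ 5 / 80 := by
    rw [intervalIntegral.integral_add, intervalIntegral.integral_sub]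
    · simp [integral_pow]
      ring
    all_goals exact Continuous.intervalIntegrable (by fun_prop) _ _
  have hmono : ∫ v in (0:ℝ)..p, (1 - v ^ 2 / 2 + v ^ 4 / 16)
      ≤ ∫ v in (0:ℝ)..p, Real.exp (-(v ^ 2 / 2)) := by
    apply intervalIntegral.integral_mono_on hp0
    · exact Continuous.intervalIntegrable (by fun_prop) _ _
    · exact Continuous.intervalIntegrable (by fun_prop) _ _
    · intro v hv
      have h1 : 1 - v ^ 2 / 4 ≤ Real.exp (-(v ^ 2 / 4)) := Real.one_sub_le_exp_neg _
      have h0 : 0 ≤ 1 - v ^ 2 / 4 := by nlinarith [hv.1, hv.2]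
      have h2 : Real.exp (-(v ^ 2 / 2)) = Real.exp (-(v ^ 2 / 4)) ^ 2 := by
        rw [← Real.exp_nat_mul]; congr 1; push_cast; ring
      rw [h2]
      nlinarith [pow_le_pow_left₀ h0 h1 2]
  rw [hpoly] at hmono
  have hs : p ^ 2 ≤ 4 := by nlinarith
  have : 0 ≤ 1 / 2 - p ^ 2 / 6 + (p ^ 2) ^ 2 / 80 := by nlinarith [sq_nonneg p]
  nlinarith [mul_nonneg hp0 this]

lemma gauss_integral_mono {p q : ℝ} (hp : 0 ≤ p) (hpq : p ≤ q) :
    ∫ v in (0:ℝ)..p, Real.exp (-(v ^ 2 / 2)) ≤ ∫ v in (0:ℝ)..q, Real.exp (-(v ^ 2 / 2)) :=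
  intervalIntegral.integral_mono_interval le_rfl hp hpq
    (Filter.Eventually.of_forall fun _ => (Real.exp_pos _).le)
    (Continuous.intervalIntegrable (by fun_prop) _ _)

/-- A window of length at least `2` around `x` carries Gaussian mass at least `1`
(without the factor `1 / √(2π)`). -/
lemma one_le_gauss_window {a b x : ℝ} (hax : a ≤ x) (hxb : x ≤ b) (hab : 2 ≤ b - a) :
    1 ≤ ∫ v in a..b, Real.exp (-((v - x) ^ 2 / 2)) := by
  have h1 : ∫ v in a..b, Real.exp (-((v - x) ^ 2 / 2))
      = (∫ v in (0:ℝ)..(x - a), Real.exp (-(v ^ 2 / 2)))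
        + ∫ v in (0:ℝ)..(b - x), Real.exp (-(v ^ 2 / 2)) := by
    rw [intervalIntegral.integral_comp_sub_right (fun v => Real.exp (-(v ^ 2 / 2))) x,
      ← intervalIntegral.integral_add_adjacent_intervals (b := 0)
        (Continuous.intervalIntegrable (by fun_prop) _ _)
        (Continuous.intervalIntegrable (by fun_prop) _ _)]
    congr 1
    have := intervalIntegral.integral_comp_neg (a := 0) (b := x - a)
      (fun v : ℝ => Real.exp (-(v ^ 2 / 2)))
    simp only [even_two, Even.neg_pow, neg_sub, neg_zero] at this
    exact this.symm
  have hnn : ∀ p : ℝ, 0 ≤ p → 0 ≤ ∫ v in (0:ℝ)..p, Real.exp (-(v ^ 2 / 2)) := fun p hp =>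
    intervalIntegral.integral_nonneg hp fun _ _ => (Real.exp_pos _).le
  have htwo := half_le_integral_gauss (p := 2) (by norm_num) le_rfl
  rw [h1]
  have e1 := hnn (x - a) (by linarith)
  have e2 := hnn (b - x) (by linarith)
  rcases le_total (x - a) 2 with hp | hp
  · rcases le_total (b - x) 2 with hq | hq
    · linarith [half_le_integral_gauss (p := x - a) (by linarith) hp,
        half_le_integral_gauss (p := b - x) (by linarith) hq]
    · linarith [gauss_integral_mono (by norm_num) hq]
  · linarith [gauss_integral_mono (by norm_num) hp]

lemma exp_sq_le_mixture {a b x : ℝ} (hax : a ≤ x) (hxb : x ≤ b) (hab : 2 ≤ b - a) :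
    Real.exp (x ^ 2 / 2) ≤ ∫ v in a..b, Real.exp (v * x - v ^ 2 / 2) := by
  have h : ∀ v : ℝ, Real.exp (v * x - v ^ 2 / 2)
      = Real.exp (x ^ 2 / 2) * Real.exp (-((v - x) ^ 2 / 2)) := fun v => by
    rw [← Real.exp_add]; congr 1; ring
  simp_rw [h]
  rw [intervalIntegral.integral_const_mul]
  exact le_mul_of_one_le_right (Real.exp_pos _).le (one_le_gauss_window hax hxb hab)

lemma ofReal_exp_sq_le_mixture {a b x : ℝ} (hax : a ≤ x) (hxb : x ≤ b) (hab : 2 ≤ b - a) :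
    ENNReal.ofReal (Real.exp (x ^ 2 / 2)) ≤
      ∫⁻ v in Set.Ioc a b, ENNReal.ofReal (Real.exp (v * x - v ^ 2 / 2)) := by
  have hle : a ≤ b := by linarith
  rw [← ofReal_integral_eq_lintegral_ofReal]
  · rw [← intervalIntegral.integral_of_le hle]
    exact ENNReal.ofReal_le_ofReal (exp_sq_le_mixture hax hxb hab)
  · exact (intervalIntegrable_iff_integrableOn_Ioc_of_le hle).1
      (Continuous.intervalIntegrable (by fun_prop) _ _)
  · exact Filter.Eventually.of_forall fun _ => (Real.exp_pos _).le

/-! ### The exponential moment of the squared deviation -/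

/-- Hoeffding's bound for the product measure, with the moment parameter normalised so that the
sub-Gaussian variance is `1`. -/
lemma lintegral_exp_deviation_le {Z : Type*} [MeasurableSpace Z] (D : Measure Z)
    [IsProbabilityMeasure D] (f : Z → ℝ) (hf : Measurable f) (hbd : ∀ z, f z ∈ Set.Icc (0:ℝ) 1)
    (n : ℕ) (hn : 1 ≤ n) (v : ℝ) :
    ∫⁻ zs, ENNReal.ofReal (Real.exp
        (v * (2 * √n * ((∫ z, f z ∂D) - (n : ℝ)⁻¹ * ∑ i, f (zs i))) - v ^ 2 / 2))
      ∂(Measure.pi fun _ : Fin n => D) ≤ 1 := by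
  have hn0 : (0:ℝ) < n := by exact_mod_cast hn
  have hs : √(n:ℝ) ^ 2 = n := Real.sq_sqrt hn0.le
  have hs0 : 0 < √(n:ℝ) := Real.sqrt_pos.2 hn0
  set R := ∫ z, f z ∂D with hR
  set t : ℝ := -(2 * v / √n) with ht
  have hsub := hasSubgaussianMGF_of_mem_Icc (μ := D) hf.aemeasurable
    (Filter.Eventually.of_forall hbd)
  have hmgf := hsub.mgf_le t
  have hintg := hsub.integrable_exp_mul t
  have hts : t ^ 2 = 4 * v ^ 2 / n := by rw [ht, neg_sq, div_pow, mul_pow, hs]; norm_num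
  have hfac : ∀ zs : Fin n → Z, Real.exp (v * (2 * √n * (R - (n : ℝ)⁻¹ * ∑ i, f (zs i))) - v ^ 2 / 2)
      = Real.exp (-(v ^ 2 / 2)) * ∏ i, Real.exp (t * (f (zs i) - R)) := by
    intro zs
    rw [← Real.exp_sum, ← Real.exp_add, ← Finset.mul_sum, Finset.sum_sub_distrib]
    congr 1
    simp only [Finset.sum_const, Finset.card_univ, Fintype.card_fin, nsmul_eq_mul]
    have h2 : (n:ℝ)⁻¹ = (√(n:ℝ))⁻¹ ^ 2 := by rw [inv_pow, hs]
    rw [ht, h2]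
    nth_rewrite 4 [← hs]
    field_simp
    ring
  simp_rw [hfac]
  rw [← ofReal_integral_eq_lintegral_ofReal]
  · rw [integral_const_mul, integral_fintype_prod_eq_pow (fun z => Real.exp (t * (f z - R))),
      Fintype.card_fin, ← ENNReal.ofReal_one]
    apply ENNReal.ofReal_le_ofReal
    have h3 : (∫ z, Real.exp (t * (f z - R)) ∂D) ^ n ≤ Real.exp (v ^ 2 / 2) := by
      calc _ ≤ (Real.exp (((((‖(1:ℝ) - 0‖₊ / 2) ^ 2 : NNReal)) : ℝ) * t ^ 2 / 2)) ^ n :=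
            pow_le_pow_left₀ (integral_nonneg fun _ => (Real.exp_pos _).le) hmgf n
        _ = _ := by
          rw [← Real.exp_nat_mul, hts]
          congr 1
          simp
          field_simp
          norm_num
    calc _ ≤ Real.exp (-(v ^ 2 / 2)) * Real.exp (v ^ 2 / 2) :=
          mul_le_mul_of_nonneg_left h3 (Real.exp_pos _).le
      _ = 1 := by rw [← Real.exp_add]; simp
  · exact (Integrable.fintype_prod (f := fun _ : Fin n => fun z => Real.exp (t * (f z - R)))
      fun _ => hintg).const_mul _
  · exact Filter.Eventually.of_forall fun _ =>
      mul_nonneg (Real.exp_pos _).le (Finset.prod_nonneg fun _ _ => (Real.exp_pos _).le)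

/-- The empirical mean of a `[0,1]`-valued function lies in `[0,1]`. -/
lemma empirical_mem_Icc {Z : Type*} {f : Z → ℝ} (hbd : ∀ z, f z ∈ Set.Icc (0:ℝ) 1)
    {n : ℕ} (hn : 1 ≤ n) (zs : Fin n → Z) :
    (n : ℝ)⁻¹ * ∑ i, f (zs i) ∈ Set.Icc (0:ℝ) 1 := by
  have hn0 : (0:ℝ) < n := by exact_mod_cast hn
  constructor
  · exact mul_nonneg (by positivity) (Finset.sum_nonneg fun i _ => (hbd _).1)
  · rw [inv_mul_le_iff₀ hn0, mul_one]
    calc ∑ i, f (zs i) ≤ ∑ _i : Fin n, (1:ℝ) := Finset.sum_le_sum fun i _ => (hbd _).2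
      _ = n := by simp

/-- The moment estimate `E[exp (2 n (R - R̂_n)²)] ≤ 2 √n`, by integrating Hoeffding's bound over the
window `[2 √n (R - 1), 2 √n R]` of parameters. -/
lemma lintegral_exp_sq_le {Z : Type*} [MeasurableSpace Z] (D : Measure Z)
    [IsProbabilityMeasure D] (f : Z → ℝ) (hf : Measurable f) (hbd : ∀ z, f z ∈ Set.Icc (0:ℝ) 1)
    (n : ℕ) (hn : 1 ≤ n) :
    ∫⁻ zs, ENNReal.ofReal (Real.exp
        (2 * n * ((∫ z, f z ∂D) - (n : ℝ)⁻¹ * ∑ i, f (zs i)) ^ 2))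
      ∂(Measure.pi fun _ : Fin n => D) ≤ ENNReal.ofReal (2 * √n) := by
  have hn1 : (1:ℝ) ≤ n := by exact_mod_cast hn
  have hs : √(n:ℝ) ^ 2 = n := Real.sq_sqrt (by linarith)
  have hs1 : 1 ≤ √(n:ℝ) := Real.one_le_sqrt.2 hn1
  set R := ∫ z, f z ∂D with hR
  calc _ ≤ ∫⁻ zs, (∫⁻ v in Set.Ioc (2 * √n * (R - 1)) (2 * √n * R), ENNReal.ofReal (Real.exp
        (v * (2 * √n * (R - (n : ℝ)⁻¹ * ∑ i, f (zs i))) - v ^ 2 / 2)))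
      ∂(Measure.pi fun _ : Fin n => D) := by
        refine lintegral_mono fun zs => ?_
        obtain ⟨he0, he1⟩ := empirical_mem_Icc hbd hn zs
        have := ofReal_exp_sq_le_mixture (a := 2 * √n * (R - 1)) (b := 2 * √n * R)
          (x := 2 * √n * (R - (n : ℝ)⁻¹ * ∑ i, f (zs i)))
          (by gcongr) (by gcongr; linarith) (by linarith)
        convert this using 3
        rw [mul_pow, mul_pow, hs]
        ring
    _ = ∫⁻ v in Set.Ioc (2 * √n * (R - 1)) (2 * √n * R), (∫⁻ zs, ENNReal.ofReal (Real.exp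
        (v * (2 * √n * (R - (n : ℝ)⁻¹ * ∑ i, f (zs i))) - v ^ 2 / 2))
      ∂(Measure.pi fun _ : Fin n => D)) := by
        apply lintegral_lintegral_swap
        apply Measurable.aemeasurable
        unfold Function.uncurry
        fun_prop
    _ ≤ ∫⁻ v in Set.Ioc (2 * √n * (R - 1)) (2 * √n * R), 1 :=
        lintegral_mono fun v => lintegral_exp_deviation_le D f hf hbd n hn v
    _ = _ := by
        simp only [lintegral_const, one_mul, Measure.restrict_apply_univ, Real.volume_Ioc]
        congr 1
        ring

/-! ### Change of measure -/

/-- The Donsker–Varadhan inequality; it is Gibbs' inequality for `Q` against the tilted prior. -/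
lemma integral_le_llr_add_log {H : Type*} [MeasurableSpace H] (Q P : Measure H)
    [IsProbabilityMeasure Q] [IsProbabilityMeasure P] (hQP : Q ≪ P)
    (hllr : Integrable (llr Q P) Q) {f : H → ℝ} (hfQ : Integrable f Q)
    (hfP : Integrable (fun h => Real.exp (f h)) P) :
    ∫ h, f h ∂Q ≤ ∫ h, llr Q P h ∂Q + Real.log (∫ h, Real.exp (f h) ∂P) := by
  have := isProbabilityMeasure_tilted hfP
  have h1 := InformationTheory.integral_llr_add_sub_measure_univ_nonneg
    (hQP.trans (absolutelyContinuous_tilted hfP))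
    (integrable_llr_tilted_right hQP hfQ hllr hfP)
  rw [integral_llr_tilted_right hQP hfQ hfP hllr] at h1
  simp only [probReal_univ] at h1
  linarith

/-- On a sample for which the exponential moment under `P` is below `2 √n / δ`, the bound holds
for every posterior. Here `r` and `e` stand for the true and the empirical risk. -/
lemma bound_of_moment_lt {H : Type*} [MeasurableSpace H] (P Q : Measure H)
    [IsProbabilityMeasure P] [IsProbabilityMeasure Q] (r e : H → ℝ)
    (hr : Measurable r) (he : Measurable e)
    (hrb : ∀ h, r h ∈ Set.Icc (0:ℝ) 1) (heb : ∀ h, e h ∈ Set.Icc (0:ℝ) 1)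
    (n : ℕ) (hn : 1 ≤ n) (δ : ℝ)
    (hM : ∫⁻ h, ENNReal.ofReal (Real.exp (2 * n * (r h - e h) ^ 2)) ∂P
      < ENNReal.ofReal (2 * √n / δ)) :
    ENNReal.ofReal (∫ h, r h ∂Q) ≤ ENNReal.ofReal (∫ h, e h ∂Q) +
      ((klDiv' Q P + ENNReal.ofReal (Real.log (2 * Real.sqrt n / δ))) / (2 * n)) ^ ((2 : ℝ)⁻¹) := by
  have hn0 : (0:ℝ) < n := by exact_mod_cast hn
  by_cases hkl : Q ≪ P ∧ Integrable (llr Q P) Q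
  swap
  · have : klDiv' Q P = ⊤ := by simp only [klDiv', if_neg hkl]
    rw [this, top_add, ENNReal.top_div_of_ne_top (by finiteness),
      ENNReal.top_rpow_of_pos (by norm_num), add_top]
    exact le_top
  obtain ⟨hQP, hllr⟩ := hkl
  have hsq : ∀ h, (r h - e h) ^ 2 ≤ 1 := fun h => by
    obtain ⟨a, b⟩ := hrb h
    obtain ⟨c, d⟩ := heb h
    exact sq_le_one_iff_abs_le_one _ |>.2 (abs_le.2 ⟨by linarith, by linarith⟩)
  have hrQ : Integrable r Q := Integrable.of_mem_Icc 0 1 hr.aemeasurable (.of_forall hrb)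
  have heQ : Integrable e Q := Integrable.of_mem_Icc 0 1 he.aemeasurable (.of_forall heb)
  have hsqQ : Integrable (fun h => (r h - e h) ^ 2) Q :=
    Integrable.of_mem_Icc 0 1 (by fun_prop) (.of_forall fun h => ⟨sq_nonneg _, hsq h⟩)
  have hexpP : Integrable (fun h => Real.exp (2 * n * (r h - e h) ^ 2)) P :=
    Integrable.of_mem_Icc 0 (Real.exp (2 * n)) (by fun_prop) (.of_forall fun h =>
      ⟨(Real.exp_pos _).le, Real.exp_le_exp.2 (mul_le_of_le_one_right (by positivity) (hsq h))⟩)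
  have hDV := integral_le_llr_add_log Q P hQP hllr (hsqQ.const_mul (2 * (n:ℝ))) hexpP
  rw [integral_const_mul] at hDV
  have hlog : Real.log (∫ h, Real.exp (2 * n * (r h - e h) ^ 2) ∂P)
      ≤ Real.log (2 * √n / δ) := by
    apply Real.log_le_log (integral_exp_pos hexpP)
    rw [← ofReal_integral_eq_lintegral_ofReal hexpP (.of_forall fun _ => (Real.exp_pos _).le)] at hM
    exact ((ENNReal.ofReal_lt_ofReal_iff_of_nonneg (integral_exp_pos hexpP).le).1 hM).le
  set d := ∫ h, r h ∂Q - ∫ h, e h ∂Q with hd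
  have hdint : ∫ h, (r h - e h) ∂Q = d := integral_sub hrQ heQ
  have hjensen : d ^ 2 ≤ ∫ h, (r h - e h) ^ 2 ∂Q := by
    have h0 : 0 ≤ ∫ h, ((r h - e h) ^ 2 - 2 * d * (r h - e h) + d ^ 2) ∂Q :=
      integral_nonneg fun h => by
        have := sq_nonneg (r h - e h - d)
        simp only [Pi.zero_apply]
        nlinarith
    have hlin : Integrable (fun h => 2 * d * (r h - e h)) Q := (hrQ.sub heQ).const_mul _
    have hsub : Integrable (fun h => (r h - e h) ^ 2 - 2 * d * (r h - e h)) Q := hsqQ.sub hlin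
    rw [integral_add hsub (integrable_const _), integral_sub hsqQ hlin, integral_const_mul,
      hdint] at h0
    simp only [integral_const, probReal_univ, one_smul] at h0
    nlinarith
  set K := ∫ h, llr Q P h ∂Q
  set L := Real.log (2 * √n / δ)
  have hmain : d ^ 2 ≤ (K + L) / (2 * n) := by
    rw [le_div_iff₀ (by positivity)]
    nlinarith
  have hkle : klDiv' Q P = ENNReal.ofReal K := by simp only [klDiv', if_pos (And.intro hQP hllr), K]
  rw [hkle]
  have hb : ENNReal.ofReal d ≤
      ((ENNReal.ofReal K + ENNReal.ofReal L) / (2 * n)) ^ ((2 : ℝ)⁻¹) := by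
    rw [ENNReal.le_rpow_inv_iff (by norm_num)]
    rcases le_total d 0 with hd0 | hd0
    · simp [ENNReal.ofReal_eq_zero.2 hd0]
    · rw [ENNReal.ofReal_rpow_of_nonneg hd0 (by norm_num), Real.rpow_two]
      calc ENNReal.ofReal (d ^ 2) ≤ ENNReal.ofReal ((K + L) / (2 * n)) :=
            ENNReal.ofReal_le_ofReal hmain
        _ = ENNReal.ofReal (K + L) / (2 * n) := by
            rw [ENNReal.ofReal_div_of_pos (by positivity), ENNReal.ofReal_mul (by norm_num)]
            simp
        _ ≤ _ := by gcongr; exact ENNReal.ofReal_add_le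
  calc ENNReal.ofReal (∫ h, r h ∂Q) = ENNReal.ofReal (∫ h, e h ∂Q + d) := by congr 1; rw [hd]; ring
    _ ≤ ENNReal.ofReal (∫ h, e h ∂Q) + ENNReal.ofReal d := ENNReal.ofReal_add_le
    _ ≤ _ := by gcongr

/-- McAllester's PAC-Bayes bound: for losses in `[0,1]`, a prior `P` on `H`,
`n ≥ 1` and `δ ∈ (0,1)`, with probability at least `1 − δ` over `n` i.i.d.
samples from `D`, simultaneously for every posterior probability measure `Q`:
`E_{h∼Q}[R h] ≤ E_{h∼Q}[R̂_n h] + sqrt ((KL(Q‖P) + log (2√n/δ)) / (2n))`. -/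
theorem mcallester_pac_bayes {H Z : Type*} [MeasurableSpace H] [MeasurableSpace Z]
    (ℓ : H → Z → ℝ) (hℓmeas : Measurable (Function.uncurry ℓ))
    (hℓbd : ∀ h z, ℓ h z ∈ Set.Icc (0:ℝ) 1)
    (P : Measure H) [IsProbabilityMeasure P]
    (D : Measure Z) [IsProbabilityMeasure D]
    (n : ℕ) (hn : 1 ≤ n) (δ : ℝ) (hδ0 : 0 < δ) (hδ1 : δ < 1) :
    ENNReal.ofReal (1 - δ) ≤
      (Measure.pi fun _ : Fin n => D)
        {zs | ∀ Q : Measure H, IsProbabilityMeasure Q →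
          ENNReal.ofReal (∫ h, (∫ z, ℓ h z ∂D) ∂Q) ≤
            ENNReal.ofReal (∫ h, ((n : ℝ)⁻¹ * ∑ i, ℓ h (zs i)) ∂Q) +
              ((klDiv' Q P + ENNReal.ofReal (Real.log (2 * Real.sqrt n / δ))) /
                  (2 * n)) ^ ((2 : ℝ)⁻¹)} := by
  have hn0 : (0:ℝ) < n := by exact_mod_cast hn
  have hs0 : 0 < √(n:ℝ) := Real.sqrt_pos.2 hn0
  have hR : Measurable fun h => ∫ z, ℓ h z ∂D :=
    (StronglyMeasurable.integral_prod_right (ν := D) hℓmeas.stronglyMeasurable).measurable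
  have hRb : ∀ h, ∫ z, ℓ h z ∂D ∈ Set.Icc (0:ℝ) 1 := fun h => by
    have hi : Integrable (ℓ h) D := Integrable.of_mem_Icc 0 1
      (hℓmeas.comp measurable_prodMk_left).aemeasurable (.of_forall (hℓbd h))
    refine ⟨integral_nonneg fun z => (hℓbd h z).1, ?_⟩
    calc ∫ z, ℓ h z ∂D ≤ ∫ _z, (1:ℝ) ∂D :=
          integral_mono hi (integrable_const _) fun z => (hℓbd h z).2
      _ = 1 := by simp
  have hE : Measurable fun p : (Fin n → Z) × H => (n : ℝ)⁻¹ * ∑ i, ℓ p.2 (p.1 i) := by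
    refine (Finset.measurable_sum _ fun i _ => ?_).const_mul _
    exact hℓmeas.comp (measurable_snd.prodMk ((measurable_pi_apply i).comp measurable_fst))
  have hG : Measurable fun p : (Fin n → Z) × H => ENNReal.ofReal (Real.exp
      (2 * n * ((∫ z, ℓ p.2 z ∂D) - (n : ℝ)⁻¹ * ∑ i, ℓ p.2 (p.1 i)) ^ 2)) :=
    ((((hR.comp measurable_snd).sub hE).pow_const 2).const_mul _).exp.ennreal_ofReal
  set μ := Measure.pi fun _ : Fin n => D with hμ
  set M : (Fin n → Z) → ℝ≥0∞ := fun zs => ∫⁻ h, ENNReal.ofReal (Real.exp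
      (2 * n * ((∫ z, ℓ h z ∂D) - (n : ℝ)⁻¹ * ∑ i, ℓ h (zs i)) ^ 2)) ∂P with hMdef
  have hMmeas : Measurable M := hG.lintegral_prod_right'
  have hMint : ∫⁻ zs, M zs ∂μ ≤ ENNReal.ofReal (2 * √n) := by
    rw [hMdef, lintegral_lintegral_swap hG.aemeasurable]
    calc _ ≤ ∫⁻ _h, ENNReal.ofReal (2 * √n) ∂P := lintegral_mono fun h =>
          lintegral_exp_sq_le D (ℓ h) (hℓmeas.comp measurable_prodMk_left) (hℓbd h) n hn
      _ = _ := by simp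
  set c := ENNReal.ofReal (2 * √n / δ) with hc
  have hc0 : c ≠ 0 := (ENNReal.ofReal_pos.2 (by positivity)).ne'
  have hbad : μ {zs | c ≤ M zs} ≤ ENNReal.ofReal δ := by
    calc μ {zs | c ≤ M zs} ≤ (∫⁻ zs, M zs ∂μ) / c :=
          meas_ge_le_lintegral_div hMmeas.aemeasurable hc0 ENNReal.ofReal_ne_top
      _ ≤ ENNReal.ofReal (2 * √n) / c := by gcongr
      _ = ENNReal.ofReal δ := by
          rw [hc, ← ENNReal.ofReal_div_of_pos (by positivity)]
          congr 1
          field_simp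
  calc ENNReal.ofReal (1 - δ) = 1 - ENNReal.ofReal δ := by
        rw [ENNReal.ofReal_sub _ hδ0.le, ENNReal.ofReal_one]
    _ ≤ 1 - μ {zs | c ≤ M zs} := by gcongr
    _ = μ {zs | c ≤ M zs}ᶜ := (prob_compl_eq_one_sub (measurableSet_le measurable_const hMmeas)).symm
    _ ≤ _ := by
        refine measure_mono fun zs hzs Q hQ => ?_
        have hlt : M zs < c := not_le.1 hzs
        exact bound_of_moment_lt P Q _ _ hR (hE.comp measurable_prodMk_left) hRb
          (fun h => empirical_mem_Icc (hℓbd h) hn zs) n hn δ hlt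
end

section
/- Exponential moment bound for the PAC-Bayes proof: for any λ > 0, any prior probability measure P on H, and any distribution D on Z, E_{Z_n ∼ D^n}[ E_{h∼P}[ exp( λ·(R̂_n(h) − R(h)) − λ²/(8n) ) ] ] ≤ 1, where Z_n = (z₁,…,z_n) are n i.i.d. samples from D. -/
/-! The expectations over the sample and over the prior may be exchanged, since the integrand is
bounded and jointly measurable. For a fixed hypothesis `h`, independence of the coordinates turns
the exponential moment of the centred empirical mean into the `n`-th power of
`E_D[exp ((λ/n) (ℓ h z - R h))]`, which Hoeffding's lemma bounds by `exp (λ² / (8 n²))`;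
the product is therefore at most `exp (λ² / (8 n))`, exactly compensating the correction term. -/

open MeasureTheory ENNReal

theorem hoeffding_exp_moment {Z : Type*} [MeasurableSpace Z] (D : Measure Z)
    [IsProbabilityMeasure D] (f : Z → ℝ) (hf : Measurable f)
    (hb : ∀ z, f z ∈ Set.Icc (0:ℝ) 1) (t : ℝ) :
    ∫ z, Real.exp (t * (f z - ∫ w, f w ∂D)) ∂D ≤ Real.exp (t ^ 2 / 8) := by
  have h := (ProbabilityTheory.hasSubgaussianMGF_of_mem_Icc (μ := D) (a := 0) (b := 1)
    hf.aemeasurable (Filter.Eventually.of_forall hb)).mgf_le t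
  unfold ProbabilityTheory.mgf at h
  refine h.trans (Real.exp_le_exp.mpr (le_of_eq ?_))
  norm_num
  ring

/-- The bound for a single hypothesis: the exponential moment factorizes over the i.i.d. sample. -/
theorem exp_moment_fixed_hypothesis {Z : Type*} [MeasurableSpace Z] (D : Measure Z)
    [IsProbabilityMeasure D] (f : Z → ℝ) (hf : Measurable f)
    (hb : ∀ z, f z ∈ Set.Icc (0:ℝ) 1) (n : ℕ) (hn : 1 ≤ n) (lam : ℝ) :
    ∫ zs, Real.exp (lam * ((n : ℝ)⁻¹ * ∑ i, f (zs i) - ∫ z, f z ∂D) - lam ^ 2 / (8 * n))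
      ∂(Measure.pi fun _ : Fin n => D) ≤ 1 := by
  have hn0 : (n : ℝ) ≠ 0 := by positivity
  have key : ∀ zs : Fin n → Z,
      Real.exp (lam * ((n : ℝ)⁻¹ * ∑ i, f (zs i) - ∫ z, f z ∂D) - lam ^ 2 / (8 * n))
        = Real.exp (-(lam ^ 2 / (8 * n)))
          * ∏ i, Real.exp (lam / n * (f (zs i) - ∫ z, f z ∂D)) := by
    intro zs
    rw [← Real.exp_sum, ← Real.exp_add, ← Finset.mul_sum, Finset.sum_sub_distrib]
    congr 1
    simp only [Finset.sum_const, Finset.card_univ, Fintype.card_fin, nsmul_eq_mul]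
    field_simp
    ring
  simp_rw [key]
  rw [integral_const_mul,
    integral_fintype_prod_eq_prod
      (f := fun (_ : Fin n) z => Real.exp (lam / n * (f z - ∫ w, f w ∂D)))]
  rw [Finset.prod_const, Finset.card_univ, Fintype.card_fin]
  calc _ ≤ Real.exp (-(lam ^ 2 / (8 * n))) * Real.exp ((lam / n) ^ 2 / 8) ^ n := by
        gcongr
        exact hoeffding_exp_moment D f hf hb _
    _ = 1 := by
        rw [← Real.exp_nat_mul, ← Real.exp_add, Real.exp_eq_one_iff]
        field_simp
        ring

/-- Exponential moment bound for the PAC-Bayes proof: for losses in `[0,1]`,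
any `λ > 0`, prior `P` on `H` and distribution `D` on `Z`,
`E_{Z_n ∼ D^n}[ E_{h∼P}[ exp (λ (R̂_n h − R h) − λ²/(8n)) ] ] ≤ 1`. -/
theorem pac_bayes_exp_moment {H Z : Type*} [MeasurableSpace H] [MeasurableSpace Z]
    (ℓ : H → Z → ℝ) (hℓmeas : Measurable (Function.uncurry ℓ))
    (hℓbd : ∀ h z, ℓ h z ∈ Set.Icc (0:ℝ) 1)
    (P : Measure H) [IsProbabilityMeasure P]
    (D : Measure Z) [IsProbabilityMeasure D]
    (n : ℕ) (hn : 1 ≤ n) (lam : ℝ) (hlam : 0 < lam) :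
    (∫ zs, (∫ h, Real.exp (lam * ((n : ℝ)⁻¹ * ∑ i, ℓ h (zs i) - ∫ z, ℓ h z ∂D)
          - lam ^ 2 / (8 * n)) ∂P) ∂(Measure.pi fun _ : Fin n => D)) ≤ 1 := by
  have hR : Measurable fun h => ∫ z, ℓ h z ∂D :=
    (hℓmeas.stronglyMeasurable.integral_prod_right (ν := D)).measurable
  have hmeas : Measurable (Function.uncurry fun (zs : Fin n → Z) (h : H) =>
      Real.exp (lam * ((n : ℝ)⁻¹ * ∑ i, ℓ h (zs i) - ∫ z, ℓ h z ∂D) - lam ^ 2 / (8 * n))) := by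
    have hl : ∀ i : Fin n, Measurable fun p : (Fin n → Z) × H => ℓ p.2 (p.1 i) := fun i =>
      hℓmeas.comp (measurable_snd.prodMk ((measurable_pi_apply i).comp measurable_fst))
    have hR' : Measurable fun p : (Fin n → Z) × H => ∫ z, ℓ p.2 z ∂D := hR.comp measurable_snd
    exact ((((Finset.measurable_sum _ fun i _ => hl i).const_mul _).sub hR').const_mul
      lam |>.sub_const _).exp
  rw [integral_integral_swap]
  · calc _ ≤ ∫ _, (1 : ℝ) ∂P := by
          refine integral_mono_of_nonneg
            (Filter.Eventually.of_forall fun h => integral_nonneg fun _ => (Real.exp_pos _).le)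
            (integrable_const _) (Filter.Eventually.of_forall fun h => ?_)
          exact exp_moment_fixed_hypothesis D (ℓ h) (hℓmeas.comp measurable_prodMk_left)
            (hℓbd h) n hn lam
      _ = 1 := by simp
  · refine Integrable.of_bound hmeas.aestronglyMeasurable (Real.exp lam)
      (Filter.Eventually.of_forall fun p => ?_)
    obtain ⟨zs, h⟩ := p
    simp only [Function.uncurry_apply_pair, Real.norm_eq_abs, Real.abs_exp, Real.exp_le_exp]
    -- The empirical risk is at most `1` and the true risk is nonnegative.
    have h1 : (n : ℝ)⁻¹ * ∑ i, ℓ h (zs i) ≤ 1 := by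
      have hs : ∑ i, ℓ h (zs i) ≤ (n : ℝ) := by
        calc _ ≤ ∑ _i : Fin n, (1 : ℝ) := Finset.sum_le_sum fun i _ => (hℓbd h (zs i)).2
          _ = n := by simp
      rw [inv_mul_le_iff₀ (by positivity)]
      simpa using hs
    have h2 : 0 ≤ ∫ z, ℓ h z ∂D := integral_nonneg fun z => (hℓbd h z).1
    have h3 : 0 ≤ lam ^ 2 / (8 * n) := by positivity
    nlinarith
end
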